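/- Let H be a complex Hilbert space and T a bounded operator on H. Then for every n ≥ 0 the spectrum of the restriction T^{⊙n} of T^{⊗n} to the symmetric subspace H^{⊙n} coincides with the spectrum of T^{⊗n}, that is, σ(T^{⊙n}) = σ(T^{⊗n}) = { Π_{j=1}^n λ_j : λ_j ∈ σ(T) }. -/

import Mathlib

open scoped InnerProductSpace

/-- An abstract presentation of the `n`-fold Hilbert tensor power of `H`:
a Hilbert space `Hn` together with a map `emb` sending `(x 1, …, x n)` to the
elementary tensor `x 1 ⊗ ⋯ ⊗ x n`, such that inner products of elementary
tensors multiply and the elementary tensors span a dense subspace. -/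
structure TensorPowerStructure (H Hn : Type*) [NormedAddCommGroup H]
    [InnerProductSpace ℂ H] [NormedAddCommGroup Hn] [InnerProductSpace ℂ Hn]
    (n : ℕ) where
  emb : (Fin n → H) → Hn
  inner_emb : ∀ x y : Fin n → H, ⟪emb x, emb y⟫_ℂ = ∏ i, ⟪x i, y i⟫_ℂ
  dense_span : Dense ((Submodule.span ℂ (Set.range emb) : Submodule ℂ Hn) : Set Hn)

/-- `Tn` is the `n`-fold tensor power `T^{⊗n}` of `T`, acting as `T` on each
factor of elementary tensors. -/
def IsTensorPowerOp {H Hn : Type*} [NormedAddCommGroup H] [InnerProductSpace ℂ H]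
    [NormedAddCommGroup Hn] [InnerProductSpace ℂ Hn] {n : ℕ}
    (tp : TensorPowerStructure H Hn n) (T : H →L[ℂ] H) (Tn : Hn →L[ℂ] Hn) : Prop :=
  ∀ x : Fin n → H, Tn (tp.emb x) = tp.emb fun i => T (x i)

/-- The symmetric subspace `H^{⊙n}` of the Hilbert tensor power `H^{⊗n}`: the
closed subspace spanned by the symmetric tensors `Σ_{σ ∈ Sₙ} x_{σ(1)} ⊗ ⋯ ⊗ x_{σ(n)}`. -/
def symSubspace {H Hn : Type*} [NormedAddCommGroup H] [InnerProductSpace ℂ H]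
    [NormedAddCommGroup Hn] [InnerProductSpace ℂ Hn] {n : ℕ}
    (tp : TensorPowerStructure H Hn n) : Submodule ℂ Hn :=
  (Submodule.span ℂ
    {y : Hn | ∃ x : Fin n → H,
      y = ∑ σ : Equiv.Perm (Fin n), tp.emb (x ∘ σ)}).topologicalClosure

/-!
Letting `T` act in a single tensor factor gives `n` commuting copies of `T` whose product is
`T^{⊗n}`, so by Gelfand theory every point of `σ(T^{⊗n})` is a product of points of `σ(T)`. Both
`T^{⊗n}` and its adjoint preserve the symmetric subspace, hence `σ(T^{⊙n}) ⊆ σ(T^{⊗n})`.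

Conversely, let `λ₁ ⋯ λₙ` be a product of points of `σ(T)`. A zero product may be rewritten with all
factors `0`; among all ways of rewriting a nonzero one, take the one maximizing `∑ |λⱼ|`. Then at
most one factor is interior to `σ(T)`, since otherwise scaling two interior factors by `t` and `t⁻¹`
would increase the sum. Boundary points of `σ(T)` are approximate eigenvalues of `T`, and their
conjugates of `T*`, while every point of `σ(T)` is an approximate eigenvalue of `T` or its conjugate
one of `T*`. So all the `λⱼ` are approximate eigenvalues of `T`, or all their conjugates of `T*`,
and symmetrized tensors of approximate eigenvectors are approximate eigenvectors for the product.
They do not degenerate: some `y` in the unit ball has inner products bounded below with any given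
unit vectors `x₁, …, xₙ`, and `⟪y ⊗ ⋯ ⊗ y, ∑ σ, x (σ 1) ⊗ ⋯ ⊗ x (σ n)⟫ = n! ∏ⱼ ⟪y, xⱼ⟫`.
-/

section CommutingProducts

open scoped Pointwise

theorem isUnit_centralizer_of_isUnit_coe {R A : Type*} [CommSemiring R] [Semiring A] [Algebra R A]
    {S : Set A} {x : Subalgebra.centralizer R S} (hx : IsUnit (x : A)) : IsUnit x := by
  obtain ⟨u, hu⟩ := hx
  have inv_mem : (↑u⁻¹ : A) ∈ Subalgebra.centralizer R S := fun c hc ↦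
    (show Commute c (u : A) from hu ▸ x.2 c hc).units_inv_right.eq
  refine ⟨⟨x, ⟨_, inv_mem⟩, Subtype.ext ?_, Subtype.ext ?_⟩, rfl⟩
  · simp [← hu]
  · simp [← hu]

theorem spectrum_coe_centralizer {R A : Type*} [CommRing R] [Ring A] [Algebra R A] {S : Set A}
    (x : Subalgebra.centralizer R S) : spectrum R (x : A) = spectrum R x :=
  (spectrum.subset_subalgebra x).antisymm fun _ hz hu ↦ hz (isUnit_centralizer_of_isUnit_coe hu)

variable {A : Type*} [NormedRing A] [NormedAlgebra ℂ A] [CompleteSpace A]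

-- The bicommutant of `{a, b}` is a commutative Banach algebra in which spectra are unchanged, and
-- there the spectrum of an element is the set of its values under characters.
theorem spectrum_mul_subset_of_commute {a b : A} (hab : Commute a b) :
    spectrum ℂ (a * b) ⊆ spectrum ℂ a * spectrum ℂ b := by
  let B : Subalgebra ℂ A := Subalgebra.centralizer ℂ (Set.centralizer {a, b})
  have pair_comm : ∀ x ∈ ({a, b} : Set A), ∀ y ∈ ({a, b} : Set A), x * y = y * x := by
    rintro x (rfl | rfl) y (rfl | rfl)
    exacts [rfl, hab.eq, hab.eq.symm, rfl]
  let _ : NormedCommRing B :=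
    { (inferInstance : NormedRing B) with
      mul_comm := fun x y ↦ Subtype.ext <|
        Set.centralizer_centralizer_comm_of_comm pair_comm _ x.2 _ y.2 }
  have : CompleteSpace B := (Set.isClosed_centralizer (Set.centralizer {a, b})).completeSpace_coe
  let a' : B := ⟨a, Set.subset_centralizer_centralizer (by simp)⟩
  let b' : B := ⟨b, Set.subset_centralizer_centralizer (by simp)⟩
  intro z hz
  obtain ⟨φ, hφ⟩ := WeakDual.CharacterSpace.mem_spectrum_iff_exists.1
    ((spectrum_coe_centralizer (a' * b')).subset hz)
  refine ⟨φ a', ?_, φ b', ?_, (map_mul φ a' b').symm.trans hφ⟩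
  · exact (spectrum_coe_centralizer a').symm.subset (AlgHom.apply_mem_spectrum φ a')
  · exact (spectrum_coe_centralizer b').symm.subset (AlgHom.apply_mem_spectrum φ b')

theorem spectrum_noncommProd_subset {ι : Type*} (s : Finset ι) (a : ι → A)
    (comm : (s : Set ι).Pairwise (Function.onFun Commute a)) :
    spectrum ℂ (s.noncommProd a comm) ⊆ ∏ i ∈ s, spectrum ℂ (a i) := by
  classical
  induction s using Finset.induction_on with
  | empty =>
    rw [Finset.noncommProd_empty, Finset.prod_empty]
    intro z hz
    cases subsingleton_or_nontrivial A
    · simp [spectrum.of_subsingleton] at hz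
    · simpa [spectrum.one_eq] using hz
  | insert j s hj ih =>
    rw [Finset.noncommProd_insert_of_notMem _ _ _ _ hj, Finset.prod_insert hj]
    have comm_rest : Commute (a j) (s.noncommProd a _) :=
      Finset.noncommProd_commute _ _ (comm.mono (by simp)) _ fun i hi ↦
        comm (by simp) (by simp [hi]) (by rintro rfl; exact hj hi)
    exact (spectrum_mul_subset_of_commute comm_rest).trans (Set.mul_subset_mul_left (ih _))

end CommutingProducts

section Retract

theorem spectrum_subset_of_retract {R E F : Type*} [CommRing R]
    [AddCommGroup E] [Module R E] [TopologicalSpace E] [IsTopologicalAddGroup E]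
    [ContinuousConstSMul R E]
    [AddCommGroup F] [Module R F] [TopologicalSpace F] [IsTopologicalAddGroup F]
    [ContinuousConstSMul R F]
    {T : E →L[R] E} {S : F →L[R] F} (i : F →L[R] E) (p : E →L[R] F)
    (hpi : ∀ x, p (i x) = x) (hi : ∀ x, i (S x) = T (i x)) (hp : ∀ x, p (T x) = S (p x)) :
    spectrum R S ⊆ spectrum R T := by
  rintro z hz ⟨u, hu⟩
  have apply_inv (x : E) : z • (↑u⁻¹ : E →L[R] E) x - T ((↑u⁻¹ : E →L[R] E) x) = x := by
    simpa [hu] using congr($(u.mul_inv) x)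
  have inv_apply (x : E) : (↑u⁻¹ : E →L[R] E) (z • x - T x) = x := by
    simpa [hu] using congr($(u.inv_mul) x)
  refine hz ⟨⟨algebraMap R _ z - S, p ∘L (↑u⁻¹ : E →L[R] E) ∘L i, ?_, ?_⟩, rfl⟩
  · ext x
    calc z • p ((↑u⁻¹ : E →L[R] E) (i x)) - S (p ((↑u⁻¹ : E →L[R] E) (i x)))
        = p (i x) := by rw [← hp, ← map_smul, ← map_sub, apply_inv]
      _ = x := hpi x
  · ext x
    calc p ((↑u⁻¹ : E →L[R] E) (i (z • x - S x)))
        = p (i x) := by rw [map_sub, map_smul, hi, inv_apply]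
      _ = x := hpi x

variable {𝕜 E : Type*} [RCLike 𝕜] [NormedAddCommGroup E] [InnerProductSpace 𝕜 E] [CompleteSpace E]
  {K : Submodule 𝕜 E} [CompleteSpace K] {T : E →L[𝕜] E} {S : K →L[𝕜] K}

theorem coe_adjoint_restrict_apply (hS : ∀ x, (S x : E) = T x)
    (hK : ∀ x ∈ K, T.adjoint x ∈ K) (x : K) : (S.adjoint x : E) = T.adjoint x := by
  suffices S.adjoint x = ⟨T.adjoint x, hK x x.2⟩ from congrArg Subtype.val this
  refine ext_inner_right 𝕜 fun y ↦ ?_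
  simp only [Submodule.coe_inner, ContinuousLinearMap.adjoint_inner_left, hS]

theorem spectrum_restrict_subset (hS : ∀ x, (S x : E) = T x)
    (hK : ∀ x ∈ K, T.adjoint x ∈ K) : spectrum 𝕜 S ⊆ spectrum 𝕜 T := by
  refine spectrum_subset_of_retract K.subtypeL K.orthogonalProjectionOnto (fun x ↦ by simp)
    (fun x ↦ hS x) fun x ↦ ext_inner_left 𝕜 fun y ↦ ?_
  calc ⟪y, K.orthogonalProjectionOnto (T x)⟫_𝕜
      = ⟪T.adjoint y, x⟫_𝕜 := by simp [ContinuousLinearMap.adjoint_inner_left]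
    _ = ⟪S.adjoint y, K.orthogonalProjectionOnto x⟫_𝕜 := by simp [coe_adjoint_restrict_apply hS hK]
    _ = ⟪y, S (K.orthogonalProjectionOnto x)⟫_𝕜 := ContinuousLinearMap.adjoint_inner_left ..

end Retract

section ApproximateEigenvalues

open Filter Topology

/-- `l` is an approximate eigenvalue of `T`, i.e. belongs to the approximate point spectrum: there
are unit vectors `x k` with `l • x k - T (x k) → 0`. -/
def IsApproxEigenvalue {𝕜 E : Type*} [NormedField 𝕜] [NormedAddCommGroup E] [NormedSpace 𝕜 E]
    (T : E →L[𝕜] E) (l : 𝕜) : Prop :=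
  ∃ x : ℕ → E, (∀ k, ‖x k‖ = 1) ∧ Tendsto (fun k ↦ l • x k - T (x k)) atTop (𝓝 0)

theorem mem_spectrum_of_tendsto_zero {𝕜 E : Type*} [NormedField 𝕜] [NormedAddCommGroup E]
    [NormedSpace 𝕜 E] {T : E →L[𝕜] E} {l : 𝕜} {c : ℝ} (hc : 0 < c) {v : ℕ → E}
    (hv : ∀ k, c ≤ ‖v k‖) (hlim : Tendsto (fun k ↦ l • v k - T (v k)) atTop (𝓝 0)) :
    l ∈ spectrum 𝕜 T := by
  rintro ⟨u, hu⟩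
  have inv_apply (x : E) : (↑u⁻¹ : E →L[𝕜] E) (l • x - T x) = x := by
    simpa [hu] using congr($(u.inv_mul) x)
  have v_tendsto : Tendsto v atTop (𝓝 0) := by
    simpa [Function.comp_def, inv_apply] using
      ((↑u⁻¹ : E →L[𝕜] E).continuous.tendsto 0).comp hlim
  have norm_tendsto : Tendsto (fun k ↦ ‖v k‖) atTop (𝓝 0) := by simpa using v_tendsto.norm
  exact hc.not_ge (ge_of_tendsto' norm_tendsto hv)

section Banach

variable {𝕜 E : Type*} [RCLike 𝕜] [NormedAddCommGroup E] [NormedSpace 𝕜 E]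
  {T : E →L[𝕜] E} {l : 𝕜}

theorem exists_mul_norm_le_of_not_isApproxEigenvalue (h : ¬ IsApproxEigenvalue T l) :
    ∃ c > 0, ∀ x, c * ‖x‖ ≤ ‖(algebraMap 𝕜 (E →L[𝕜] E) l - T) x‖ := by
  contrapose! h
  choose x hx using fun k : ℕ ↦ h (1 / ((k : ℝ) + 1)) (by positivity)
  have norm_pos (k : ℕ) : 0 < ‖x k‖ := norm_pos_iff.2 fun h0 ↦ by simpa [h0] using hx k
  refine ⟨fun k ↦ ((‖x k‖⁻¹ : ℝ) : 𝕜) • x k, fun k ↦ ?_, ?_⟩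
  · simp [norm_smul, (norm_pos k).ne']
  · refine squeeze_zero_norm (fun k ↦ ?_) tendsto_one_div_add_atTop_nhds_zero_nat
    rw [map_smul, smul_comm, ← smul_sub, norm_smul, RCLike.norm_ofReal, abs_inv, abs_norm,
      inv_mul_le_iff₀ (norm_pos k), mul_comm]
    exact (hx k).le

variable [CompleteSpace E]

theorem isUnit_of_mem_closure_of_mul_norm_le {A : E →L[𝕜] E} {c : ℝ} (hc : 0 < c)
    (hA : ∀ x, c * ‖x‖ ≤ ‖A x‖) (hcl : A ∈ closure {B : E →L[𝕜] E | IsUnit B}) : IsUnit A := by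
  obtain ⟨_, ⟨u, rfl⟩, hu⟩ := Metric.mem_closure_iff.1 hcl (c / 2) (by positivity)
  rw [dist_eq_norm, norm_sub_rev] at hu
  have norm_inv_le : ‖(↑u⁻¹ : E →L[𝕜] E)‖ ≤ 2 / c := by
    refine ContinuousLinearMap.opNorm_le_bound _ (by positivity) fun y ↦ ?_
    set w := (↑u⁻¹ : E →L[𝕜] E) y
    have u_apply : (u : E →L[𝕜] E) w = y := congr($(u.mul_inv) y)
    have norm_apply_le : ‖A w‖ ≤ ‖y‖ + c / 2 * ‖w‖ := calc
      ‖A w‖ = ‖y - ((u : E →L[𝕜] E) - A) w‖ := by simp [u_apply]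
      _ ≤ ‖y‖ + ‖((u : E →L[𝕜] E) - A) w‖ := norm_sub_le _ _
      _ ≤ ‖y‖ + c / 2 * ‖w‖ := by gcongr; exact ContinuousLinearMap.le_of_opNorm_le _ hu.le w
    rw [div_mul_eq_mul_div, le_div_iff₀ hc]
    linarith [hA w]
  have norm_lt_one : ‖(↑u⁻¹ : E →L[𝕜] E) * (u - A)‖ < 1 := calc
    _ ≤ ‖(↑u⁻¹ : E →L[𝕜] E)‖ * ‖(u : E →L[𝕜] E) - A‖ := norm_mul_le _ _
    _ ≤ 2 / c * ‖(u : E →L[𝕜] E) - A‖ := by gcongr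
    _ < 2 / c * (c / 2) := by gcongr
    _ = 1 := by field_simp
  have factorization : A = u * (1 - (↑u⁻¹ : E →L[𝕜] E) * (u - A)) := by
    simp [mul_sub]
  rw [factorization]
  exact u.isUnit.mul (isUnit_one_sub_of_norm_lt_one norm_lt_one)

theorem isApproxEigenvalue_of_mem_frontier (hl : l ∈ frontier (spectrum 𝕜 T)) :
    IsApproxEigenvalue T l := by
  by_contra h
  have mem_spectrum : l ∈ spectrum 𝕜 T := (spectrum.isClosed T).frontier_subset hl
  obtain ⟨c, hc, hbound⟩ := exists_mul_norm_le_of_not_isApproxEigenvalue h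
  have mem_closure : l ∈ closure (resolventSet 𝕜 T) := by
    rw [← frontier_compl, spectrum, compl_compl] at hl
    exact frontier_subset_closure hl
  have sub_mem_closure : algebraMap 𝕜 (E →L[𝕜] E) l - T ∈ closure {B | IsUnit B} :=
    map_mem_closure (f := fun z ↦ algebraMap 𝕜 (E →L[𝕜] E) z - T) (by fun_prop) mem_closure
      fun _ hz ↦ hz
  exact mem_spectrum (isUnit_of_mem_closure_of_mul_norm_le hc hbound sub_mem_closure)

end Banach

section Hilbert

variable {𝕜 E : Type*} [RCLike 𝕜] [NormedAddCommGroup E] [InnerProductSpace 𝕜 E] [CompleteSpace E]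

theorem isUnit_of_antilipschitzWith_of_adjoint_injective {A : E →L[𝕜] E}
    (hA : ∃ c, AntilipschitzWith c A) (hinj : Function.Injective A.adjoint) : IsUnit A := by
  rw [ContinuousLinearMap.isUnit_iff_bijective,
    ContinuousLinearMap.bijective_iff_dense_range_and_antilipschitz,
    Submodule.topologicalClosure_eq_top_iff, ContinuousLinearMap.orthogonal_range]
  exact ⟨LinearMap.ker_eq_bot.2 hinj, hA⟩

theorem star_mem_spectrum_adjoint_iff {T : E →L[𝕜] E} {l : 𝕜} :
    star l ∈ spectrum 𝕜 T.adjoint ↔ l ∈ spectrum 𝕜 T := by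
  rw [← ContinuousLinearMap.star_eq_adjoint, spectrum.map_star, Set.star_mem_star]

theorem star_mem_frontier_spectrum_adjoint_iff {T : E →L[𝕜] E} {l : 𝕜} :
    star l ∈ frontier (spectrum 𝕜 T.adjoint) ↔ l ∈ frontier (spectrum 𝕜 T) := by
  have preimage_spectrum : star ⁻¹' spectrum 𝕜 T.adjoint = spectrum 𝕜 T :=
    Set.ext fun _ ↦ star_mem_spectrum_adjoint_iff
  rw [← preimage_spectrum]
  exact Set.ext_iff.1 ((starₗᵢ 𝕜).toHomeomorph.preimage_frontier (spectrum 𝕜 T.adjoint)) l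

theorem isApproxEigenvalue_or_adjoint {T : E →L[𝕜] E} {l : 𝕜} (hl : l ∈ spectrum 𝕜 T) :
    IsApproxEigenvalue T l ∨ IsApproxEigenvalue T.adjoint (star l) := by
  by_contra! h
  have bound := exists_mul_norm_le_of_not_isApproxEigenvalue h.1
  have bound_adjoint := exists_mul_norm_le_of_not_isApproxEigenvalue h.2
  have adjoint_eq : (algebraMap 𝕜 (E →L[𝕜] E) l - T).adjoint =
      algebraMap 𝕜 (E →L[𝕜] E) (star l) - T.adjoint := by
    simp only [← ContinuousLinearMap.star_eq_adjoint, star_sub, algebraMap_star_comm]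
  rw [← adjoint_eq, ← antilipschitzWith_iff_exists_mul_le_norm] at bound_adjoint
  exact hl <| isUnit_of_antilipschitzWith_of_adjoint_injective
    (antilipschitzWith_iff_exists_mul_le_norm.2 bound) bound_adjoint.choose_spec.injective

end Hilbert

end ApproximateEigenvalues

section ProductsInCompactSets

open Filter Topology

variable {𝕜 : Type*} [RCLike 𝕜] {s : Set 𝕜}

theorem exists_one_lt_smul_mem_inv_smul_mem {a b : 𝕜} (ha : s ∈ 𝓝 a) (hb : s ∈ 𝓝 b) :
    ∃ t : ℝ, 1 < t ∧ t • a ∈ s ∧ t⁻¹ • b ∈ s := by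
  have smul_tendsto : Tendsto (fun t : ℝ ↦ t • a) (𝓝 1) (𝓝 a) := by
    simpa using (tendsto_id (x := 𝓝 (1 : ℝ))).smul_const a
  have inv_smul_tendsto : Tendsto (fun t : ℝ ↦ t⁻¹ • b) (𝓝 1) (𝓝 b) := by
    simpa using (tendsto_inv₀ (one_ne_zero (α := ℝ))).smul_const b
  have eventually_mem := ((smul_tendsto.eventually_mem ha).and
    (inv_smul_tendsto.eventually_mem hb)).filter_mono (nhdsWithin_le_nhds (s := Set.Ioi 1))
  obtain ⟨t, ⟨hta, htb⟩, ht⟩ := (eventually_mem.and self_mem_nhdsWithin).exists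
  exact ⟨t, ht, hta, htb⟩

variable {ι : Type*} [Fintype ι]

theorem exists_prod_eq_sum_norm_lt {m : ι → 𝕜} (hm : ∀ k, m k ∈ s) {i j : ι} (hij : i ≠ j)
    (hi : s ∈ 𝓝 (m i)) (hj : s ∈ 𝓝 (m j)) (hi0 : m i ≠ 0) (hle : ‖m j‖ ≤ ‖m i‖) :
    ∃ m' : ι → 𝕜, (∀ k, m' k ∈ s) ∧ ∏ k, m' k = ∏ k, m k ∧ ∑ k, ‖m k‖ < ∑ k, ‖m' k‖ := by
  classical
  obtain ⟨t, ht, hti, htj⟩ := exists_one_lt_smul_mem_inv_smul_mem hi hj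
  let w : ι → ℝ := Function.update (Function.update 1 i t) j t⁻¹
  have wi : w i = t := by simp [w, hij]
  have wj : w j = t⁻¹ := by simp [w]
  have w_of_ne (k : ι) (hk : k ≠ i ∧ k ≠ j) : w k = 1 := by simp [w, hk]
  refine ⟨fun k ↦ w k • m k, fun k ↦ ?_, ?_, ?_⟩
  · change w k • m k ∈ s
    by_cases hki : k = i
    · rwa [hki, wi]
    by_cases hkj : k = j
    · rwa [hkj, wj]
    · simpa [w_of_ne k ⟨hki, hkj⟩] using hm k
  · have prod_w : ∏ k, w k = 1 := by
      rw [Fintype.prod_eq_mul i j hij w_of_ne, wi, wj, mul_inv_cancel₀ (by positivity)]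
    rw [Finset.prod_smul, prod_w, one_smul]
  · have sum_sub : ∑ k, (‖w k • m k‖ - ‖m k‖) =
        (t * ‖m i‖ - ‖m i‖) + (t⁻¹ * ‖m j‖ - ‖m j‖) := by
      rw [Fintype.sum_eq_add i j hij fun k hk ↦ by simp [w_of_ne k hk], wi, wj, norm_smul,
        norm_smul, norm_inv, Real.norm_of_nonneg (by positivity)]
    rw [← sub_pos, ← Finset.sum_sub_distrib, sum_sub]
    have inv_lt : t⁻¹ < 1 := inv_lt_one_of_one_lt₀ ht
    have mul_inv : t * t⁻¹ = 1 := mul_inv_cancel₀ (by positivity)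
    calc 0 < (t - 1) * (1 - t⁻¹) * ‖m i‖ :=
          mul_pos (mul_pos (sub_pos.2 ht) (sub_pos.2 inv_lt)) (norm_pos_iff.2 hi0)
      _ = (t * ‖m i‖ - ‖m i‖) - (1 - t⁻¹) * ‖m i‖ := by linear_combination -‖m i‖ * mul_inv
      _ ≤ (t * ‖m i‖ - ‖m i‖) - (1 - t⁻¹) * ‖m j‖ := by gcongr
      _ = (t * ‖m i‖ - ‖m i‖) + (t⁻¹ * ‖m j‖ - ‖m j‖) := by ring

theorem exists_prod_eq_subsingleton_interior (hs : IsCompact s) {l : ι → 𝕜}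
    (hl : ∀ k, l k ∈ s) (hl0 : ∏ k, l k ≠ 0) :
    ∃ m : ι → 𝕜, (∀ k, m k ∈ s) ∧ ∏ k, m k = ∏ k, l k ∧ {k | m k ∈ interior s}.Subsingleton := by
  have isCompact_tuples : IsCompact
      ((Set.univ.pi fun _ ↦ s) ∩ {m : ι → 𝕜 | ∏ k, m k = ∏ k, l k}) :=
    (isCompact_univ_pi fun _ ↦ hs).inter_right (isClosed_eq (by fun_prop) continuous_const)
  obtain ⟨m, ⟨hms, hmprod⟩, hmax⟩ := isCompact_tuples.exists_isMaxOn ⟨l, fun k _ ↦ hl k, rfl⟩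
    (f := fun m ↦ ∑ k, ‖m k‖) (by fun_prop)
  have hms' (k : ι) : m k ∈ s := hms k (Set.mem_univ k)
  have hm0 (k : ι) : m k ≠ 0 := fun h ↦
    hl0 (hmprod.symm.trans (Finset.prod_eq_zero (Finset.mem_univ k) h))
  refine ⟨m, hms', hmprod, fun i hi j hj ↦ ?_⟩
  by_contra hij
  wlog hle : ‖m j‖ ≤ ‖m i‖ generalizing i j
  · exact this j hj i hi (Ne.symm hij) (le_of_not_ge hle)
  obtain ⟨m', hm's, hm'prod, hlt⟩ := exists_prod_eq_sum_norm_lt hms' hij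
    (mem_interior_iff_mem_nhds.1 hi) (mem_interior_iff_mem_nhds.1 hj) (hm0 i) hle
  exact hlt.not_ge (hmax ⟨fun k _ ↦ hm's k, hm'prod.trans hmprod⟩)

end ProductsInCompactSets

section CommonVector

variable {𝕜 E : Type*} [RCLike 𝕜] [NormedAddCommGroup E] [InnerProductSpace 𝕜 E]

theorem exists_norm_le_le_norm_inner_add_smul {x : E} (hx : ‖x‖ = 1) (y : E) {r : ℝ}
    (hr : 0 ≤ r) : ∃ a : 𝕜, ‖a‖ ≤ r ∧ r / 2 ≤ ‖⟪y + a • x, x⟫_𝕜‖ := by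
  rcases le_or_gt (r / 2) ‖⟪y, x⟫_𝕜‖ with hyx | hyx
  · exact ⟨0, by simpa using hr, by simpa using hyx⟩
  · refine ⟨(r : 𝕜), by simp [abs_of_nonneg hr], ?_⟩
    have inner_eq : ⟪y + (r : 𝕜) • x, x⟫_𝕜 = r + ⟪y, x⟫_𝕜 := by
      simp [inner_add_left, inner_smul_left, inner_self_eq_norm_sq_to_K, hx, add_comm]
    have lower := norm_sub_le_norm_add (r : 𝕜) ⟪y, x⟫_𝕜
    rw [RCLike.norm_ofReal, abs_of_nonneg hr] at lower
    rw [inner_eq]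
    linarith

-- The slack in `‖y‖ ≤ 1 - (1 / 4) ^ #s` pays for the perturbations of `y` still to come.
theorem exists_norm_le_forall_le_norm_inner {ι : Type*} (s : Finset ι) (x : ι → E)
    (hx : ∀ i ∈ s, ‖x i‖ = 1) :
    ∃ y : E, ‖y‖ ≤ 1 - (1 / 4) ^ s.card ∧ ∀ i ∈ s, (1 / 4) ^ s.card ≤ ‖⟪y, x i⟫_𝕜‖ := by
  classical
  induction s using Finset.induction_on with
  | empty => exact ⟨0, by simp⟩
  | insert j s hj ih =>
    rw [Finset.forall_mem_insert] at hx
    obtain ⟨hxj, hxs⟩ := hx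
    obtain ⟨y, hy, hyx⟩ := ih hxs
    rw [Finset.card_insert_of_notMem hj, pow_succ]
    set δ : ℝ := (1 / 4) ^ s.card
    have hδ : 0 < δ := by positivity
    obtain ⟨a, ha, haj⟩ :=
      exists_norm_le_le_norm_inner_add_smul (𝕜 := 𝕜) hxj y (half_pos hδ).le
    refine ⟨y + a • x j, ?_, Finset.forall_mem_insert _ _ _ |>.2 ⟨by linarith, fun i hi ↦ ?_⟩⟩
    · calc ‖y + a • x j‖ ≤ ‖y‖ + ‖a‖ := by simpa [norm_smul, hxj] using norm_add_le y (a • x j)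
        _ ≤ 1 - δ * (1 / 4) := by linarith
    · have perturbation_le : ‖⟪a • x j, x i⟫_𝕜‖ ≤ ‖a‖ := by
        simpa [norm_smul, hxj, hxs i hi] using norm_inner_le_norm (𝕜 := 𝕜) (a • x j) (x i)
      have lower := norm_sub_le_norm_add ⟪y, x i⟫_𝕜 ⟪a • x j, x i⟫_𝕜
      rw [inner_add_left]
      linarith [hyx i hi]

end CommonVector

section Gram

theorem exists_continuousLinearMap_of_inner_eq {𝕜 ι E F : Type*} [RCLike 𝕜]
    [NormedAddCommGroup E] [InnerProductSpace 𝕜 E] [NormedAddCommGroup F] [InnerProductSpace 𝕜 F]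
    [CompleteSpace F] {v : ι → E} {w : ι → F}
    (hv : Dense (Submodule.span 𝕜 (Set.range v) : Set E))
    (hvw : ∀ i j, ⟪w i, w j⟫_𝕜 = ⟪v i, v j⟫_𝕜) :
    ∃ B : E →L[𝕜] F, ∀ i, B (v i) = w i := by
  let e := Finsupp.linearCombination 𝕜 v
  let f := Finsupp.linearCombination 𝕜 w
  have denseRange : DenseRange e := by
    rwa [← Finsupp.range_linearCombination] at hv
  have norm_eq (c : ι →₀ 𝕜) : ‖f c‖ = ‖e c‖ := by
    have inner_eq : ⟪f c, f c⟫_𝕜 = ⟪e c, e c⟫_𝕜 := by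
      simp only [e, f, Finsupp.linearCombination_apply, Finsupp.sum, sum_inner, inner_sum,
        inner_smul_left, inner_smul_right, hvw]
    rw [norm_eq_sqrt_re_inner (𝕜 := 𝕜), inner_eq, ← norm_eq_sqrt_re_inner]
  refine ⟨f.extendOfNorm e, fun i ↦ ?_⟩
  simpa [e, f] using LinearMap.extendOfNorm_eq denseRange
    ⟨1, fun c ↦ (norm_eq c).le.trans_eq (one_mul _).symm⟩ (Finsupp.single i 1)

end Gram

section ApproximateFactorization

variable {𝕜 E ι : Type*} [RCLike 𝕜] [NormedAddCommGroup E] [InnerProductSpace 𝕜 E]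
  [CompleteSpace E]

theorem forall_isApproxEigenvalue_or_adjoint {T : E →L[𝕜] E} {m : ι → 𝕜}
    (hm : ∀ k, m k ∈ spectrum 𝕜 T) (hint : {k | m k ∈ interior (spectrum 𝕜 T)}.Subsingleton) :
    (∀ k, IsApproxEigenvalue T (m k)) ∨ ∀ k, IsApproxEigenvalue T.adjoint (star (m k)) := by
  have mem_frontier (k : ι) (hk : m k ∉ interior (spectrum 𝕜 T)) :
      m k ∈ frontier (spectrum 𝕜 T) := by
    rw [(spectrum.isClosed T).frontier_eq]
    exact ⟨hm k, hk⟩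
  by_cases h : ∀ k, IsApproxEigenvalue T (m k)
  · exact .inl h
  push Not at h
  obtain ⟨i, hi⟩ := h
  have hi_int : m i ∈ interior (spectrum 𝕜 T) := by
    by_contra hi'
    exact hi (isApproxEigenvalue_of_mem_frontier (mem_frontier i hi'))
  refine .inr fun k ↦ ?_
  by_cases hk : m k ∈ interior (spectrum 𝕜 T)
  · rw [hint hk hi_int]
    exact (isApproxEigenvalue_or_adjoint (hm i)).resolve_left hi
  · exact isApproxEigenvalue_of_mem_frontier
      (star_mem_frontier_spectrum_adjoint_iff.2 (mem_frontier k hk))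

theorem exists_prod_eq_forall_isApproxEigenvalue_or_adjoint [Fintype ι] {T : E →L[𝕜] E}
    {l : ι → 𝕜} (hl : ∀ k, l k ∈ spectrum 𝕜 T) :
    ∃ m : ι → 𝕜, ∏ k, m k = ∏ k, l k ∧ ((∀ k, IsApproxEigenvalue T (m k)) ∨
      ∀ k, IsApproxEigenvalue T.adjoint (star (m k))) := by
  by_cases hl0 : ∏ k, l k = 0
  · obtain ⟨i, -, hi⟩ := Finset.prod_eq_zero_iff.1 hl0
    refine ⟨fun _ ↦ 0, by rw [hl0, Finset.prod_eq_zero (Finset.mem_univ i) rfl], ?_⟩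
    exact (isApproxEigenvalue_or_adjoint (hi ▸ hl i)).imp (fun h _ ↦ h) fun h _ ↦ h
  · obtain ⟨m, hm, hprod, hint⟩ :=
      exists_prod_eq_subsingleton_interior (spectrum.isCompact T) hl hl0
    exact ⟨m, hprod, forall_isApproxEigenvalue_or_adjoint hm hint⟩

end ApproximateFactorization

section Multilinear

open Filter Topology

theorem tendsto_multilinear_sub_zero {𝕜 ι G : Type*} {E : ι → Type*} [NontriviallyNormedField 𝕜]
    [Fintype ι] [∀ i, NormedAddCommGroup (E i)] [∀ i, NormedSpace 𝕜 (E i)]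
    [NormedAddCommGroup G] [NormedSpace 𝕜 G] (f : ContinuousMultilinearMap 𝕜 E G)
    {α : Type*} {F : Filter α} {a b : α → ∀ i, E i} {C : ℝ} (ha : ∀ k, ‖a k‖ ≤ C)
    (hb : ∀ k, ‖b k‖ ≤ C) (hab : Tendsto (fun k ↦ a k - b k) F (𝓝 0)) :
    Tendsto (fun k ↦ f (a k) - f (b k)) F (𝓝 0) := by
  refine squeeze_zero_norm
    (a := fun k ↦ ‖f‖ * Fintype.card ι * C ^ (Fintype.card ι - 1) * ‖a k - b k‖) (fun k ↦ ?_)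
    (by simpa using hab.norm.const_mul _)
  refine (f.norm_image_sub_le (a k) (b k)).trans ?_
  gcongr
  exact max_le (ha k) (hb k)

end Multilinear

namespace TensorPowerStructure

variable {H Hn : Type*} [NormedAddCommGroup H] [InnerProductSpace ℂ H] [NormedAddCommGroup Hn]
  [InnerProductSpace ℂ Hn] {n : ℕ} (tp : TensorPowerStructure H Hn n)

section MultilinearEmb

theorem clm_ext {A B : Hn →L[ℂ] Hn} (h : ∀ x, A (tp.emb x) = B (tp.emb x)) : A = B :=
  ContinuousLinearMap.ext_on tp.dense_span (Set.forall_mem_range.2 h)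

theorem ext_inner_emb {u v : Hn} (h : ∀ y, ⟪tp.emb y, u⟫_ℂ = ⟪tp.emb y, v⟫_ℂ) : u = v := by
  refine innerSL_inj.1 (ContinuousLinearMap.ext_on tp.dense_span ?_)
  refine Set.forall_mem_range.2 fun y ↦ ?_
  rw [innerSL_apply_apply, innerSL_apply_apply, ← inner_conj_symm, h, inner_conj_symm]

theorem norm_emb (x : Fin n → H) : ‖tp.emb x‖ = ∏ i, ‖x i‖ := by
  have norm_sq : ‖tp.emb x‖ ^ 2 = (∏ i, ‖x i‖) ^ 2 := by
    have inner_self := tp.inner_emb x x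
    simp only [inner_self_eq_norm_sq_to_K, Finset.prod_pow] at inner_self
    exact_mod_cast inner_self
  exact (sq_eq_sq₀ (by positivity) (by positivity)).1 norm_sq

/-- The elementary tensor map `emb` as a continuous multilinear map. Multilinearity is inherited,
by density, from that of the products of inner products `∏ i, ⟪y i, x i⟫` in `x`. -/
noncomputable def multilinearEmb : ContinuousMultilinearMap ℂ (fun _ : Fin n ↦ H) Hn :=
  MultilinearMap.mkContinuous
    { toFun := tp.emb
      map_update_add' := fun x j u v ↦ tp.ext_inner_emb fun y ↦ by
        rw [inner_add_right, tp.inner_emb, tp.inner_emb, tp.inner_emb]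
        exact ((MultilinearMap.mkPiAlgebra ℂ (Fin n) ℂ).compLinearMap
          fun i ↦ innerₛₗ ℂ (y i)).map_update_add x j u v
      map_update_smul' := fun x j c u ↦ tp.ext_inner_emb fun y ↦ by
        rw [inner_smul_right, tp.inner_emb, tp.inner_emb]
        exact ((MultilinearMap.mkPiAlgebra ℂ (Fin n) ℂ).compLinearMap
          fun i ↦ innerₛₗ ℂ (y i)).map_update_smul x j c u }
    1 fun x ↦ by simp [tp.norm_emb]

theorem multilinearEmb_apply (x : Fin n → H) : tp.multilinearEmb x = tp.emb x := rfl

theorem emb_update_add (x : Fin n → H) (j : Fin n) (u v : H) :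
    tp.emb (Function.update x j (u + v)) =
      tp.emb (Function.update x j u) + tp.emb (Function.update x j v) :=
  tp.multilinearEmb.map_update_add x j u v

theorem emb_update_smul (x : Fin n → H) (j : Fin n) (c : ℂ) (u : H) :
    tp.emb (Function.update x j (c • u)) = c • tp.emb (Function.update x j u) :=
  tp.multilinearEmb.map_update_smul x j c u

end MultilinearEmb

section Symmetrize

/-- The symmetrized tensor `∑ σ, x (σ 1) ⊗ ⋯ ⊗ x (σ n)` of `x`, not normalized by `n!`, as a
continuous multilinear map. -/
noncomputable def symmetrize : ContinuousMultilinearMap ℂ (fun _ : Fin n ↦ H) Hn :=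
  ∑ σ : Equiv.Perm (Fin n), tp.multilinearEmb.domDomCongr σ

theorem symmetrize_apply (x : Fin n → H) :
    tp.symmetrize x = ∑ σ : Equiv.Perm (Fin n), tp.emb (x ∘ σ) := by
  simp only [symmetrize, sum_apply,
    ContinuousMultilinearMap.domDomCongr_apply, multilinearEmb_apply, Function.comp_def]

theorem symmetrize_mem_symSubspace (x : Fin n → H) : tp.symmetrize x ∈ symSubspace tp :=
  Submodule.le_topologicalClosure _ (Submodule.subset_span ⟨x, tp.symmetrize_apply x⟩)

theorem inner_emb_const_symmetrize (y : H) (x : Fin n → H) :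
    ⟪tp.emb fun _ ↦ y, tp.symmetrize x⟫_ℂ = n.factorial * ∏ i, ⟪y, x i⟫_ℂ := by
  have inner_perm (σ : Equiv.Perm (Fin n)) :
      ⟪tp.emb fun _ ↦ y, tp.emb (x ∘ σ)⟫_ℂ = ∏ i, ⟪y, x i⟫_ℂ :=
    (tp.inner_emb _ _).trans (Equiv.prod_comp σ fun i ↦ ⟪y, x i⟫_ℂ)
  simp only [symmetrize_apply, inner_sum, inner_perm, Finset.sum_const, Finset.card_univ,
    Fintype.card_perm, Fintype.card_fin, nsmul_eq_mul]

theorem pow_le_norm_symmetrize {x : Fin n → H} (hx : ∀ i, ‖x i‖ = 1) :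
    ((1 / 4) ^ n) ^ n ≤ ‖tp.symmetrize x‖ := by
  obtain ⟨y, hy, hyx⟩ := exists_norm_le_forall_le_norm_inner (𝕜 := ℂ) Finset.univ x
    fun i _ ↦ hx i
  rw [Finset.card_fin] at hy hyx
  have norm_y_le : ‖y‖ ≤ 1 := hy.trans (sub_le_self _ (by positivity))
  calc ((1 / 4 : ℝ) ^ n) ^ n
      = ∏ _i : Fin n, (1 / 4 : ℝ) ^ n := by simp
    _ ≤ ∏ i, ‖⟪y, x i⟫_ℂ‖ := Finset.prod_le_prod (fun _ _ ↦ by positivity) hyx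
    _ ≤ n.factorial * ∏ i, ‖⟪y, x i⟫_ℂ‖ :=
        le_mul_of_one_le_left (by positivity) (mod_cast n.factorial_pos)
    _ = ‖⟪tp.emb fun _ ↦ y, tp.symmetrize x⟫_ℂ‖ := by
        rw [inner_emb_const_symmetrize, norm_mul, norm_prod, Complex.norm_natCast]
    _ ≤ ‖tp.emb fun _ ↦ y‖ * ‖tp.symmetrize x‖ := norm_inner_le_norm _ _
    _ ≤ 1 * ‖tp.symmetrize x‖ := by
        gcongr
        simpa [norm_emb] using pow_le_one₀ (norm_nonneg y) norm_y_le
    _ = ‖tp.symmetrize x‖ := one_mul _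

end Symmetrize

section Leg

variable [CompleteSpace H] [CompleteSpace Hn]

-- Operators are combinations of unitaries, and a unitary acting in one factor preserves the inner
-- products of elementary tensors.
theorem exists_leg (j : Fin n) (A : H →L[ℂ] H) :
    ∃ B : Hn →L[ℂ] Hn, ∀ x, B (tp.emb x) = tp.emb (Function.update x j (A (x j))) := by
  have mem_span : A ∈ Submodule.span ℂ (unitary (H →L[ℂ] H) : Set (H →L[ℂ] H)) := by
    simp [CStarAlgebra.span_unitary]
  induction mem_span using Submodule.span_induction with
  | mem U hU =>
    refine exists_continuousLinearMap_of_inner_eq tp.dense_span fun x y ↦ ?_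
    rw [tp.inner_emb, tp.inner_emb]
    refine Finset.prod_congr rfl fun i _ ↦ ?_
    rcases eq_or_ne i j with rfl | hij
    · simpa using ContinuousLinearMap.inner_map_map_of_mem_unitary hU (x i) (y i)
    · simp [hij]
  | zero => exact ⟨0, fun x ↦ by simpa using (tp.emb_update_smul x j 0 0).symm⟩
  | add A₁ A₂ _ _ ih₁ ih₂ =>
    obtain ⟨⟨B₁, hB₁⟩, ⟨B₂, hB₂⟩⟩ := And.intro ih₁ ih₂
    exact ⟨B₁ + B₂, fun x ↦ by simp [emb_update_add, hB₁, hB₂]⟩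
  | smul c A _ ih =>
    obtain ⟨B, hB⟩ := ih
    exact ⟨c • B, fun x ↦ by simp [emb_update_smul, hB]⟩

/-- The operator `1 ⊗ ⋯ ⊗ A ⊗ ⋯ ⊗ 1`, with `A` in the `j`-th factor. -/
noncomputable def leg (j : Fin n) (A : H →L[ℂ] H) : Hn →L[ℂ] Hn :=
  (tp.exists_leg j A).choose

theorem leg_apply_emb (j : Fin n) (A : H →L[ℂ] H) (x : Fin n → H) :
    tp.leg j A (tp.emb x) = tp.emb (Function.update x j (A (x j))) :=
  (tp.exists_leg j A).choose_spec x

/-- `leg j` as an algebra homomorphism, so that it does not enlarge spectra. -/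
noncomputable def legHom (j : Fin n) : (H →L[ℂ] H) →ₐ[ℂ] (Hn →L[ℂ] Hn) :=
  AlgHom.ofLinearMap
    { toFun := tp.leg j
      map_add' := fun A B ↦ tp.clm_ext fun x ↦ by simp [leg_apply_emb, emb_update_add]
      map_smul' := fun c A ↦ tp.clm_ext fun x ↦ by simp [leg_apply_emb, emb_update_smul] }
    (tp.clm_ext fun x ↦ by simp [leg_apply_emb])
    fun A B ↦ tp.clm_ext fun x ↦ by simp [leg_apply_emb]

theorem pairwise_commute_leg (A : Fin n → H →L[ℂ] H) (s : Set (Fin n)) :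
    s.Pairwise (Function.onFun Commute fun j ↦ tp.leg j (A j)) := fun i _ j _ hij ↦
  tp.clm_ext fun x ↦ by simp [leg_apply_emb, hij, hij.symm, Function.update_comm hij]

theorem noncommProd_leg_apply_emb (A : Fin n → H →L[ℂ] H) (s : Finset (Fin n)) (x : Fin n → H) :
    s.noncommProd (fun j ↦ tp.leg j (A j)) (tp.pairwise_commute_leg A s) (tp.emb x) =
      tp.emb (s.piecewise (fun j ↦ A j (x j)) x) := by
  induction s using Finset.induction_on with
  | empty => simp
  | insert j s hj ih =>
    rw [Finset.noncommProd_insert_of_notMem _ _ _ _ hj, mul_apply_eq_comp, ih,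
      leg_apply_emb, Finset.piecewise_insert, Finset.piecewise_eq_of_notMem _ _ _ hj]

theorem spectrum_leg_subset (j : Fin n) (A : H →L[ℂ] H) :
    spectrum ℂ (tp.leg j A) ⊆ spectrum ℂ A :=
  AlgHom.spectrum_apply_subset (tp.legHom j) A

end Leg

end TensorPowerStructure

namespace IsTensorPowerOp

open Filter Topology

variable {H Hn : Type*} [NormedAddCommGroup H] [InnerProductSpace ℂ H] [NormedAddCommGroup Hn]
  [InnerProductSpace ℂ Hn] {n : ℕ} {tp : TensorPowerStructure H Hn n} {T : H →L[ℂ] H}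
  {Tn : Hn →L[ℂ] Hn} {Ts : symSubspace tp →L[ℂ] symSubspace tp}

theorem apply_symmetrize (hTn : IsTensorPowerOp tp T Tn) (x : Fin n → H) :
    Tn (tp.symmetrize x) = tp.symmetrize fun i ↦ T (x i) := by
  rw [tp.symmetrize_apply, tp.symmetrize_apply, map_sum]
  exact Finset.sum_congr rfl fun σ _ ↦ hTn (x ∘ σ)

theorem apply_mem_symSubspace (hTn : IsTensorPowerOp tp T Tn) {u : Hn}
    (hu : u ∈ symSubspace tp) : Tn u ∈ symSubspace tp := by
  have span_le : Submodule.span ℂ {u : Hn | ∃ x : Fin n → H, u = ∑ σ : Equiv.Perm (Fin n),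
      tp.emb (x ∘ σ)} ≤ (symSubspace tp).comap (Tn : Hn →ₗ[ℂ] Hn) := by
    rw [Submodule.span_le]
    rintro _ ⟨x, rfl⟩
    rw [← tp.symmetrize_apply, SetLike.mem_coe, Submodule.mem_comap]
    exact (hTn.apply_symmetrize x).symm ▸ tp.symmetrize_mem_symSubspace _
  exact Submodule.topologicalClosure_minimal _ span_le
    ((Submodule.isClosed_topologicalClosure _).preimage Tn.continuous) hu

theorem prod_mem_spectrum_restrict_of_isApproxEigenvalue (hTn : IsTensorPowerOp tp T Tn)
    (hTs : ∀ x, (Ts x : Hn) = Tn x) {l : Fin n → ℂ} (hl : ∀ j, IsApproxEigenvalue T (l j)) :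
    ∏ j, l j ∈ spectrum ℂ Ts := by
  choose x hx hlim using hl
  let v (k : ℕ) : symSubspace tp :=
    ⟨tp.symmetrize fun j ↦ x j k, tp.symmetrize_mem_symSubspace _⟩
  refine mem_spectrum_of_tendsto_zero (v := v) (c := ((1 / 4) ^ n) ^ n) (by positivity)
    (fun k ↦ tp.pow_le_norm_symmetrize fun j ↦ hx j k) (tendsto_subtype_rng.2 ?_)
  have coe_eq (k : ℕ) : (((∏ j, l j) • v k - Ts (v k) : symSubspace tp) : Hn) =
      tp.symmetrize (fun j ↦ l j • x j k) - tp.symmetrize fun j ↦ T (x j k) := by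
    rw [Submodule.coe_sub, Submodule.coe_smul, hTs, hTn.apply_symmetrize,
      tp.symmetrize.map_smul_univ]
  simp only [coe_eq]
  have norm_le_of_forall {w : Fin n → H} (hw : ∀ j, ‖w j‖ ≤ max ‖l‖ ‖T‖) : ‖w‖ ≤ max ‖l‖ ‖T‖ :=
    (pi_norm_le_iff_of_nonneg (by positivity)).2 hw
  refine tendsto_multilinear_sub_zero tp.symmetrize (C := max ‖l‖ ‖T‖)
    (fun k ↦ norm_le_of_forall fun j ↦ ?_) (fun k ↦ norm_le_of_forall fun j ↦ ?_)
    (tendsto_pi_nhds.2 hlim)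
  · exact le_max_of_le_left (by simpa [norm_smul, hx] using norm_le_pi_norm l j)
  · exact le_max_of_le_right (by simpa [hx] using T.le_opNorm (x j k))

variable [CompleteSpace H] [CompleteSpace Hn]

theorem adjoint (hTn : IsTensorPowerOp tp T Tn) : IsTensorPowerOp tp T.adjoint Tn.adjoint :=
  fun x ↦ tp.ext_inner_emb fun y ↦ by
    simp only [ContinuousLinearMap.adjoint_inner_right, hTn y, tp.inner_emb]

theorem prod_mem_spectrum_restrict [CompleteSpace (symSubspace tp)] (hTn : IsTensorPowerOp tp T Tn)
    (hTs : ∀ x, (Ts x : Hn) = Tn x) {l : Fin n → ℂ} (hl : ∀ j, l j ∈ spectrum ℂ T) :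
    ∏ j, l j ∈ spectrum ℂ Ts := by
  obtain ⟨m, hprod, hm | hm⟩ := exists_prod_eq_forall_isApproxEigenvalue_or_adjoint hl
  · rw [← hprod]
    exact hTn.prod_mem_spectrum_restrict_of_isApproxEigenvalue hTs hm
  · have adjoint_restrict := coe_adjoint_restrict_apply hTs
      fun _ ↦ hTn.adjoint.apply_mem_symSubspace
    rw [← hprod, ← star_mem_spectrum_adjoint_iff, star_prod]
    exact hTn.adjoint.prod_mem_spectrum_restrict_of_isApproxEigenvalue adjoint_restrict hm

theorem eq_noncommProd_leg (hTn : IsTensorPowerOp tp T Tn) :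
    Tn = Finset.univ.noncommProd (fun j ↦ tp.leg j T)
      (tp.pairwise_commute_leg (fun _ ↦ T) _) :=
  tp.clm_ext fun x ↦ by
    rw [tp.noncommProd_leg_apply_emb fun _ ↦ T, Finset.piecewise_univ, hTn x]

theorem spectrum_subset (hTn : IsTensorPowerOp tp T Tn) :
    spectrum ℂ Tn ⊆ {z | ∃ l : Fin n → ℂ, (∀ j, l j ∈ spectrum ℂ T) ∧ z = ∏ j, l j} := by
  intro z hz
  rw [hTn.eq_noncommProd_leg] at hz
  obtain ⟨l, hl, hprod⟩ :=
    (Set.mem_fintype_prod _ _).1 (spectrum_noncommProd_subset _ _ _ hz)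
  exact ⟨l, fun j ↦ tp.spectrum_leg_subset j T (hl j), hprod.symm⟩

end IsTensorPowerOp

/-- The spectrum of the restriction `T^{⊙n}` of `T^{⊗n}` to the symmetric
subspace `H^{⊙n}` coincides with `σ(T^{⊗n})`, and both equal the set of
products `λ₁ ⋯ λₙ` with `λⱼ ∈ σ(T)`. -/
theorem spectrum_symTensorPow_eq_spectrum_tensorPow
    {H Hn : Type*} [NormedAddCommGroup H] [InnerProductSpace ℂ H] [CompleteSpace H]
    [Nontrivial H]
    [NormedAddCommGroup Hn] [InnerProductSpace ℂ Hn] [CompleteSpace Hn]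
    {n : ℕ} (tp : TensorPowerStructure H Hn n)
    (T : H →L[ℂ] H) (Tn : Hn →L[ℂ] Hn) (hTn : IsTensorPowerOp tp T Tn)
    (Ts : ↥(symSubspace tp) →L[ℂ] ↥(symSubspace tp))
    (hTs : ∀ x : symSubspace tp, ((Ts x : Hn)) = Tn x) :
    spectrum ℂ Ts = spectrum ℂ Tn ∧
      spectrum ℂ Tn =
        {z : ℂ | ∃ l : Fin n → ℂ, (∀ j, l j ∈ spectrum ℂ T) ∧ z = ∏ j, l j} := by
  have : CompleteSpace (symSubspace tp) :=
    (Submodule.isClosed_topologicalClosure _).completeSpace_coe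
  have sym_subset : spectrum ℂ Ts ⊆ spectrum ℂ Tn :=
    spectrum_restrict_subset hTs fun _ ↦ hTn.adjoint.apply_mem_symSubspace
  have products_subset : {z : ℂ | ∃ l : Fin n → ℂ, (∀ j, l j ∈ spectrum ℂ T) ∧ z = ∏ j, l j} ⊆
      spectrum ℂ Ts := by
    rintro _ ⟨l, hl, rfl⟩
    exact hTn.prod_mem_spectrum_restrict hTs hl
  exact ⟨sym_subset.antisymm (hTn.spectrum_subset.trans products_subset),
    hTn.spectrum_subset.antisymm (products_subset.trans sym_subset)⟩
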